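/- If K ∈ C(A) separates L(A₁) from L(A₂) (i.e. L(A₁) ⊆ K and L(A₂) ∩ K = ∅), where A₁, A₂ are NFAs over A and P is a tagging compatible with both, then γ⁻¹(K) separates L[A₁,P] from L[A₂,P], where γ: (A ∪ 𝔼)* → A* is the morphism defined by γ(a) = a for a ∈ A and γ(b) = ε for b ∈ 𝔼. In particular L[A₁,P] ⊆ γ⁻¹(K) and L[A₂,P] ∩ γ⁻¹(K) = ∅. -/

import Mathlib

/-! Infrastructure: NFAs with an explicit finite set of transitions, taggings over the
two-letter alphabet `𝔼 = Bool`, the relabeled NFA `A[P]`, the languages `K[A,P]` and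
`L[A,P]`, and recognition of a language by a monoid morphism. The disjoint union
`A ∪ 𝔼` is modelled as the sum type `A ⊕ Bool`. -/

/-- A nondeterministic finite automaton with a finite set `trans` of transitions. -/
structure NFA' (A Q : Type) where
  trans : Finset (Q × A × Q)
  start : Finset Q
  accept : Finset Q

namespace NFA'

variable {A Q T : Type}

/-- `Path M q w r` : the word `w` labels a run from state `q` to state `r`. -/
inductive Path (M : NFA' A Q) : Q → List A → Q → Prop
  | nil (q : Q) : Path M q [] q
  | cons {q r s : Q} {a : A} {w : List A} :
      (q, a, r) ∈ M.trans → Path M r w s → Path M q (a :: w) s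

/-- The language recognized by an NFA. -/
def lang (M : NFA' A Q) : Language A :=
  {w | ∃ q ∈ M.start, ∃ r ∈ M.accept, M.Path q w r}

/-- The NFA `A[P]`: each transition gets relabeled by a distinct letter of `A × T`;
the choice of distinct tags for the transitions (coming from the fixed linear orders on
`δ` and `G`) is recorded by the injection `ι`. -/
def relabel [DecidableEq Q] [DecidableEq A] [DecidableEq T]
    (M : NFA' A Q) (ι : {x // x ∈ M.trans} → T) : NFA' (A × T) Q where
  trans := M.trans.attach.image (fun x => (x.1.1, (x.1.2.1, ι x), x.1.2.2))
  start := M.start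
  accept := M.accept

end NFA'

/-- A morphism `α : A* → M` recognizes `L` when `L = α⁻¹(F)` for some `F ⊆ M`. -/
def Recognizes {A M : Type} [Monoid M] (α : FreeMonoid A →* M) (L : Language A) : Prop :=
  ∃ F : Set M, L = {w : List A | α (FreeMonoid.ofList w) ∈ F}

/-- The language `K[A,P] ⊆ (A × T)*` recognized by the relabeled NFA `A[P]`. -/
def KAP {A Q T : Type} [DecidableEq Q] [DecidableEq A] [DecidableEq T]
    (M : NFA' A Q) (ι : {x // x ∈ M.trans} → T) : Language (A × T) :=
  (M.relabel ι).lang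

/-- The language `L[A,P] = 𝔼* · μ⁻¹(K[A,P]) ⊆ (A ∪ 𝔼)*`, where a word of `(A𝔼*)*` is
(uniquely) decomposed as `a₁w₁ ⋯ aₘwₘ` (`aⱼ ∈ A`, `wⱼ ∈ 𝔼*`) and
`μ(a₁w₁ ⋯ aₘwₘ) = (a₁,τ(w₁)) ⋯ (aₘ,τ(wₘ))`. -/
def LAP {A Q T : Type} [DecidableEq Q] [DecidableEq A] [DecidableEq T] [Monoid T]
    (M : NFA' A Q) (τ : FreeMonoid Bool →* T) (ι : {x // x ∈ M.trans} → T) :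
    Language (A ⊕ Bool) :=
  {w | ∃ (w₀ : List Bool) (l : List (A × List Bool)),
      w = w₀.map Sum.inr ++ (l.map (fun p => Sum.inl p.1 :: p.2.map Sum.inr)).flatten ∧
      (l.map (fun p => (p.1, τ (FreeMonoid.ofList p.2)))) ∈ KAP M ι}

/-- The morphism `γ : (A ∪ 𝔼)* → A*` defined by `γ(a) = a` for `a ∈ A` and `γ(b) = ε`
for `b ∈ 𝔼`, applied to a word. -/
def eraseE {A : Type} (w : List (A ⊕ Bool)) : List A :=
  w.filterMap (fun x => Sum.elim some (fun _ => none) x)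

/-! Forgetting the tags turns a run of `A[P]` into a run of `A`, and `γ(w)` is `μ(w)` with its
tags forgotten once the leading factor in `𝔼*` is removed from `w`. Hence `γ` maps `L[A,P]` into
`L(A)`, so pulling back along `γ` preserves separation. -/

namespace NFA'

variable {A B Q T : Type}

theorem Path.map_label {M : NFA' A Q} {N : NFA' B Q} (f : A → B)
    (hf : ∀ {q a r}, (q, a, r) ∈ M.trans → (q, f a, r) ∈ N.trans) {q r : Q} {w : List A}
    (h : M.Path q w r) : N.Path q (w.map f) r := by
  induction h with
  | nil q => exact .nil q
  | cons ht _ ih => exact .cons (hf ht) ih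

variable [DecidableEq Q] [DecidableEq A] [DecidableEq T] {M : NFA' A Q}
  {ι : {x // x ∈ M.trans} → T}

theorem mem_trans_of_mem_relabel_trans {q r : Q} {p : A × T}
    (h : (q, p, r) ∈ (M.relabel ι).trans) : (q, p.1, r) ∈ M.trans := by
  obtain ⟨⟨_, hx⟩, -, rfl, rfl, rfl⟩ : ∃ x ∈ M.trans.attach,
      x.1.1 = q ∧ (x.1.2.1, ι x) = p ∧ x.1.2.2 = r := by
    simpa only [relabel, Finset.mem_image, Prod.mk.injEq] using h
  exact hx

theorem map_fst_mem_lang_of_mem_KAP {w : List (A × T)} (hw : w ∈ KAP M ι) :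
    w.map Prod.fst ∈ M.lang := by
  obtain ⟨q, hq, r, hr, hpath⟩ := hw
  exact ⟨q, hq, r, hr, hpath.map_label Prod.fst mem_trans_of_mem_relabel_trans⟩

end NFA'

section Erasure

variable {A : Type}

theorem eraseE_append (u v : List (A ⊕ Bool)) : eraseE (u ++ v) = eraseE u ++ eraseE v :=
  List.filterMap_append

theorem eraseE_inl_cons (a : A) (w : List (A ⊕ Bool)) :
    eraseE (Sum.inl a :: w) = a :: eraseE w :=
  rfl

theorem eraseE_map_inr (u : List Bool) : eraseE (u.map Sum.inr : List (A ⊕ Bool)) = [] := by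
  simp [eraseE]

theorem eraseE_flatten_map_inl_cons_map_inr (l : List (A × List Bool)) :
    eraseE (l.map fun p => Sum.inl p.1 :: p.2.map Sum.inr).flatten = l.map Prod.fst := by
  induction l with
  | nil => rfl
  | cons p l ih =>
    simp only [List.map_cons, List.flatten_cons, List.cons_append, eraseE_inl_cons,
      eraseE_append, eraseE_map_inr, List.nil_append, ih]

end Erasure

theorem eraseE_mem_lang_of_mem_LAP {A Q T : Type} [DecidableEq Q] [DecidableEq A]
    [DecidableEq T] [Monoid T] {M : NFA' A Q} {τ : FreeMonoid Bool →* T}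
    {ι : {x // x ∈ M.trans} → T} {w : List (A ⊕ Bool)} (hw : w ∈ LAP M τ ι) :
    eraseE w ∈ M.lang := by
  obtain ⟨w₀, l, rfl, hl⟩ := hw
  rw [eraseE_append, eraseE_map_inr, List.nil_append, eraseE_flatten_map_inl_cons_map_inr]
  simpa only [List.map_map, Function.comp_def] using NFA'.map_fst_mem_lang_of_mem_KAP hl

theorem statement19_general {A Q₁ Q₂ T₁ T₂ : Type} [DecidableEq A]
    [DecidableEq Q₁] [DecidableEq Q₂] [Monoid T₁] [DecidableEq T₁] [Monoid T₂] [DecidableEq T₂]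
    (τ₁ : FreeMonoid Bool →* T₁) (τ₂ : FreeMonoid Bool →* T₂)
    (N₁ : NFA' A Q₁) (N₂ : NFA' A Q₂)
    (ι₁ : {x // x ∈ N₁.trans} → T₁) (ι₂ : {x // x ∈ N₂.trans} → T₂)
    (K : Language A) (hsep₁ : N₁.lang ≤ K) (hsep₂ : N₂.lang ⊓ K = ⊥) :
    LAP N₁ τ₁ ι₁ ≤ {w : List (A ⊕ Bool) | eraseE w ∈ K} ∧
    LAP N₂ τ₂ ι₂ ⊓ {w : List (A ⊕ Bool) | eraseE w ∈ K} = ⊥ := by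
  refine ⟨fun w hw => hsep₁ (eraseE_mem_lang_of_mem_LAP hw), eq_bot_iff.mpr ?_⟩
  rintro w ⟨hw, hwK⟩
  have h_mem : eraseE w ∈ N₂.lang ⊓ K := ⟨eraseE_mem_lang_of_mem_LAP hw, hwK⟩
  exact hsep₂.le h_mem

theorem statement19 {A Q₁ Q₂ T : Type} [Fintype A] [DecidableEq A]
    [Fintype Q₁] [DecidableEq Q₁] [Fintype Q₂] [DecidableEq Q₂]
    [Monoid T] [Fintype T] [DecidableEq T]
    (C : ∀ X : Type, Set (Language X))
    (τ : FreeMonoid Bool →* T) (G : Finset T)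
    (N₁ : NFA' A Q₁) (N₂ : NFA' A Q₂)
    (hcompat₁ : N₁.trans.card ≤ G.card) (hcompat₂ : N₂.trans.card ≤ G.card)
    (ι₁ : {x // x ∈ N₁.trans} → T) (hι₁ : Function.Injective ι₁) (hι₁G : ∀ x, ι₁ x ∈ G)
    (ι₂ : {x // x ∈ N₂.trans} → T) (hι₂ : Function.Injective ι₂) (hι₂G : ∀ x, ι₂ x ∈ G)
    (K : Language A) (hK : K ∈ C A)
    (hsep₁ : N₁.lang ≤ K) (hsep₂ : N₂.lang ⊓ K = ⊥) :
    LAP N₁ τ ι₁ ≤ {w : List (A ⊕ Bool) | eraseE w ∈ K} ∧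
    LAP N₂ τ ι₂ ⊓ {w : List (A ⊕ Bool) | eraseE w ∈ K} = ⊥ :=
  statement19_general τ τ N₁ N₂ ι₁ ι₂ K hsep₁ hsep₂
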